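/- For every growing function φ with φ(n) < n for all n, there exists a sequence q₂(n) with q₂(n) ~ φ(n)·2^n such that D(n, q₂(n)) ≲ 2n as n → ∞. -/

import Mathlib

open Filter

namespace Rev

/-- A reversible gate `TOF(I; t)` on `N` lines: a control set `I` with `|I| ≤ 2`
and a target `t ∉ I`.  `|I| = 0, 1, 2` correspond to NOT, CNOT, C²NOT. -/
structure Gate (N : ℕ) where
  I : Finset (Fin N)
  t : Fin N
  card_le : I.card ≤ 2
  t_not_mem : t ∉ I

/-- The transformation computed by a gate: the target coordinate is XORed with the
conjunction of the control coordinates (the empty conjunction is `1`). -/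
def Gate.apply {N : ℕ} (g : Gate N) (x : Fin N → Bool) : Fin N → Bool :=
  fun j => if j = g.t then xor (x g.t) (decide (∀ i ∈ g.I, x i = true)) else x j

/-- A reversible circuit: a finite sequence (composition) of gates. -/
abbrev Circuit (N : ℕ) := List (Gate N)

/-- The transformation computed by a circuit (composition of the gate maps). -/
def Circuit.eval {N : ℕ} (S : Circuit N) (x : Fin N → Bool) : Fin N → Bool :=
  S.foldl (fun v g => g.apply v) x

/-- Gate complexity: the number of gates. -/
def Circuit.L {N : ℕ} (S : Circuit N) : ℕ := S.length

/-- The number of NOT and CNOT gates. -/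
def Circuit.LC {N : ℕ} (S : Circuit N) : ℕ := (S.filter fun g => g.I.card ≤ 1).length

/-- The number of C²NOT (Toffoli) gates. -/
def Circuit.LT {N : ℕ} (S : Circuit N) : ℕ := (S.filter fun g => g.I.card = 2).length

/-- The quantum weight, given weights `WC` for NOT/CNOT gates and `WT` for C²NOT gates. -/
noncomputable def Circuit.W {N : ℕ} (WC WT : ℝ) (S : Circuit N) : ℝ :=
  WC * S.LC + WT * S.LT

/-- A circuit has depth one if the sets `{t} ∪ I` of its gates are pairwise disjoint. -/
def DepthOne {N : ℕ} (S : Circuit N) : Prop :=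
  S.Pairwise fun g₁ g₂ => Disjoint (insert g₁.t g₁.I) (insert g₂.t g₂.I)

/-- The depth of a circuit: the minimal number of depth-one sub-circuits whose
concatenation is the circuit. -/
noncomputable def Circuit.D {N : ℕ} (S : Circuit N) : ℕ :=
  sInf {d | ∃ parts : List (Circuit N),
    parts.length = d ∧ parts.flatten = S ∧ ∀ p ∈ parts, DepthOne p}

/-- Padding an input vector with zero values on `q` additional inputs. -/
def pad {n q : ℕ} (x : Fin n → Bool) : Fin (n + q) → Bool :=
  fun i => if h : (i : ℕ) < n then x ⟨i, h⟩ else false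

/-- A circuit `S` with `n + q` inputs implements `f : 𝔹ⁿ → 𝔹ᵐ` with `q` additional
inputs: there is a permutation `π` of the output positions such that for every `x`,
applying `S` to `⟨x, 0, …, 0⟩` and permuting the coordinates by `π` yields a vector
whose first `m` coordinates equal `f x`. -/
def Implements {n q m : ℕ} (S : Circuit (n + q)) (f : (Fin n → Bool) → Fin m → Bool) :
    Prop :=
  m ≤ n + q ∧ ∃ π : Equiv.Perm (Fin (n + q)), ∀ x : Fin n → Bool, ∀ j : Fin m,
    ∀ hj : (j : ℕ) < n + q, Circuit.eval S (pad x) (π ⟨j, hj⟩) = f x j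

/-- `f ∈ F(n, q)`: `f : 𝔹ⁿ → 𝔹ⁿ` is implementable with `q` additional inputs. -/
def Implementable (n q : ℕ) (f : (Fin n → Bool) → Fin n → Bool) : Prop :=
  ∃ S : Circuit (n + q), Implements S f

/-- `L(f, q)`: minimal gate complexity of a circuit implementing `f` with `q`
additional inputs. -/
noncomputable def Lmin (n q : ℕ) (f : (Fin n → Bool) → Fin n → Bool) : ℕ :=
  sInf {l | ∃ S : Circuit (n + q), Implements S f ∧ S.L = l}

/-- The Shannon gate complexity function `L(n, q)`. -/
noncomputable def Lsh (n q : ℕ) : ℕ :=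
  sSup {l | ∃ f, Implementable n q f ∧ Lmin n q f = l}

/-- `D(f, q)`: minimal depth of a circuit implementing `f` with `q` additional inputs. -/
noncomputable def Dmin (n q : ℕ) (f : (Fin n → Bool) → Fin n → Bool) : ℕ :=
  sInf {d | ∃ S : Circuit (n + q), Implements S f ∧ S.D = d}

/-- The Shannon depth function `D(n, q)`. -/
noncomputable def Dsh (n q : ℕ) : ℕ :=
  sSup {d | ∃ f, Implementable n q f ∧ Dmin n q f = d}

/-- `W(f, q)`: minimal quantum weight of a circuit implementing `f` with `q`
additional inputs. -/
noncomputable def Wmin (WC WT : ℝ) (n q : ℕ) (f : (Fin n → Bool) → Fin n → Bool) : ℝ :=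
  sInf {w | ∃ S : Circuit (n + q), Implements S f ∧ Circuit.W WC WT S = w}

/-- The Shannon quantum weight function `W(n, q)`. -/
noncomputable def Wsh (WC WT : ℝ) (n q : ℕ) : ℝ :=
  sSup {w | ∃ f, Implementable n q f ∧ Wmin WC WT n q f = w}

/-- `a ~ b`: `a n / b n → 1`. -/
def AsympEquiv (a b : ℕ → ℝ) : Prop :=
  Tendsto (fun n => a n / b n) atTop (nhds 1)

/-- `a ≲ b`: `limsup (a n / b n) ≤ 1`. -/
def AsympLE (a b : ℕ → ℝ) : Prop :=
  Filter.limsup (fun n => a n / b n) atTop ≤ 1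

/-- A growing function: nondecreasing and tending to `+∞`. -/
def Growing (φ : ℕ → ℝ) : Prop :=
  Monotone φ ∧ Tendsto φ atTop atTop

/-- `2 ^ (n - ⌈n / φ(n)⌉)` as a real number. -/
noncomputable def pow2e (φ : ℕ → ℝ) (n : ℕ) : ℝ :=
  (2 : ℝ) ^ ((n : ℤ) - ⌈(n : ℝ) / φ n⌉)

end Rev

/-!
Only the multiset of Boolean functions held by the lines matters, since the outputs may be permuted.
Copying and XOR-ing `c` lines, or AND-ing them with a zero line per gate, takes depth `⌈log₂ c⌉`
by balanced trees, and independent computations run in parallel.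

Split the `n` variables into `k` small and `m = n - k` large ones and expand each output along the
large ones, `fᵢ(y, w) = ⨁ₐ fᵢ(y, a) · wᵃ`. All `2 ^ 2 ^ k` functions of the small variables are
computed once, in depth `2 ^ k + 2 k + O(log n)`, then copied to the `n 2 ^ m` places where they
occur in depth `m + log₂ n`, while the minterms `wᵃ` are computed in depth `m + O(log n)` alongside.
The final XOR trees have depth `m`, so that the total is `2 n + 2 ^ k + O(log n)`, with
`O(n 2 ^ m + 4 ^ 2 ^ k)` additional lines. If there are `p 2 ^ n` of these, `2 ^ k ≈ 8 n / p` fits,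
and this is `o(n)` as soon as `p → ∞`.
-/

namespace Rev

/-! ### Multisets and families -/

section Multisets

variable {α β ι : Type*}

lemma exists_perm_of_map_univ_eq [Fintype ι] {f g : ι → α}
    (h : Finset.univ.val.map f = Finset.univ.val.map g) :
    ∃ σ : Equiv.Perm ι, f = g ∘ σ := by
  classical
  have hfiber (c : α) : Nonempty ({a // f a = c} ≃ {b // g b = c}) := by
    have hcount := congrArg (Multiset.count c) h
    rw [Multiset.count_map, Multiset.count_map] at hcount
    rw [← Fintype.card_eq, Fintype.card_subtype, Fintype.card_subtype]
    simpa only [Finset.card, Finset.filter_val, eq_comm] using hcount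
  exact ⟨Equiv.ofFiberEquiv fun c => (hfiber c).some,
    funext fun i => (Equiv.ofFiberEquiv_map _ i).symm⟩

lemma exists_disjoint_of_map_eq_add {v : ι → β} {A B : Multiset β} {T : Finset ι}
    (h : T.val.map v = A + B) :
    ∃ T₁ T₂ : Finset ι, Disjoint T₁ T₂ ∧ T.val = T₁.val + T₂.val ∧
      T₁.val.map v = A ∧ T₂.val.map v = B := by
  obtain ⟨s₁, s₂, h₁, h₂, hs⟩ : ∃ s₁ s₂, A = s₁.map v ∧ B = s₂.map v ∧ T.val = s₁ + s₂ := by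
    simpa only [Multiset.rel_add_left, ← Multiset.rel_map_right, Multiset.rel_eq] using
      Multiset.rel_map_right.1 (Multiset.rel_eq.2 h.symm)
  have hnodup := T.nodup
  rw [hs, Multiset.nodup_add] at hnodup
  obtain ⟨hs₁, hs₂, hdisj⟩ := hnodup
  exact ⟨⟨s₁, hs₁⟩, ⟨s₂, hs₂⟩, Finset.disjoint_val.1 hdisj, hs, h₁.symm, h₂.symm⟩

lemma exists_fin_map_eq_map_add {m N : ℕ} (F : Fin m → α) (G : Multiset α)
    (hN : m + G.card = N) :
    ∃ w : Fin N → α, Finset.univ.val.map w = Finset.univ.val.map F + G ∧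
      ∀ (j : Fin m) (hj : (j : ℕ) < N), w ⟨j, hj⟩ = F j := by
  obtain rfl : (List.ofFn F ++ G.toList).length = N := by simpa using hN
  refine ⟨(List.ofFn F ++ G.toList).get, ?_, fun j _ => ?_⟩
  · rw [Fin.univ_val_map, List.ofFn_get, Fin.univ_val_map, ← Multiset.coe_add,
      Multiset.coe_toList]
  · simp

lemma card_filter_snd_eq [Fintype α] [Fintype β] [DecidableEq β] (b : β) :
    (Finset.univ.filter fun p : α × β => p.2 = b).card = Fintype.card α := by
  have heq : (Finset.univ.filter fun p : α × β => p.2 = b) = Finset.univ ×ˢ {b} := by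
    ext ⟨a, c⟩
    simp [eq_comm]
  rw [heq, Finset.card_product, Finset.card_singleton, mul_one, Finset.card_univ]

end Multisets

/-! ### The contents of the lines of a circuit -/

section Circuits

variable {X : Type*} {N : ℕ}

/-- `p.run v i` is the content of line `i`, as a function of the input, once `p` has been applied
to lines with contents `v`. -/
def Circuit.run (p : Circuit N) (v : Fin N → X → Bool) : Fin N → X → Bool :=
  fun i x => p.eval (fun j => v j x) i

/-- Every gate of `p` has its target and its controls in `T`. -/
def Circuit.SupportedOn (p : Circuit N) (T : Finset (Fin N)) : Prop :=
  ∀ g ∈ p, insert g.t g.I ⊆ T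

lemma prod_eq_decide {ι : Type*} (s : Finset ι) (b : ι → Bool) :
    ∏ i ∈ s, b i = decide (∀ i ∈ s, b i = true) := by
  classical
  induction s using Finset.induction_on with
  | empty => simp [Bool.one_eq_true]
  | insert a s ha ih =>
    rw [Finset.prod_insert ha, ih, Bool.mul_eq_and, Bool.eq_iff_iff]
    simp only [Bool.and_eq_true, decide_eq_true_eq, Finset.forall_mem_insert]

lemma run_append (p q : Circuit N) (v : Fin N → X → Bool) :
    Circuit.run (p ++ q) v = q.run (p.run v) := by
  funext i x
  simp only [Circuit.run, Circuit.eval, List.foldl_append]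

lemma run_singleton (g : Gate N) (v : Fin N → X → Bool) :
    Circuit.run [g] v = Function.update v g.t (v g.t + ∏ i ∈ g.I, v i) := by
  funext i x
  rcases eq_or_ne i g.t with rfl | hi
  · simp [Circuit.run, Circuit.eval, Gate.apply, prod_eq_decide, Bool.add_eq_xor]
  · simp [Circuit.run, Circuit.eval, Gate.apply, hi]

lemma run_cons (g : Gate N) (p : Circuit N) (v : Fin N → X → Bool) :
    Circuit.run (g :: p) v = p.run (Function.update v g.t (v g.t + ∏ i ∈ g.I, v i)) := by
  rw [← run_singleton, ← run_append, List.singleton_append]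

variable {p : Circuit N} {T : Finset (Fin N)}

lemma Circuit.SupportedOn.mono {T' : Finset (Fin N)} (hp : p.SupportedOn T) (hT : T ⊆ T') :
    p.SupportedOn T' :=
  fun g hg => (hp g hg).trans hT

lemma Circuit.SupportedOn.run_eq_of_notMem (hp : p.SupportedOn T) (v : Fin N → X → Bool)
    {i : Fin N} (hi : i ∉ T) : p.run v i = v i := by
  induction p generalizing v with
  | nil => rfl
  | cons g p ih =>
    obtain ⟨hg, hp⟩ := List.forall_mem_cons.1 hp
    have hne : i ≠ g.t := fun h => hi (hg (h ▸ Finset.mem_insert_self _ _))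
    rw [run_cons, ih hp, Function.update_of_ne hne]

lemma Circuit.SupportedOn.run_congr (hp : p.SupportedOn T) {v w : Fin N → X → Bool}
    (hvw : ∀ i ∈ T, v i = w i) {i : Fin N} (hi : i ∈ T) : p.run v i = p.run w i := by
  induction p generalizing v w with
  | nil => exact hvw i hi
  | cons g p ih =>
    obtain ⟨hg, hp⟩ := List.forall_mem_cons.1 hp
    obtain ⟨ht, hI⟩ := Finset.insert_subset_iff.1 hg
    rw [run_cons, run_cons]
    refine ih hp fun j hj => ?_
    rw [Function.update_apply, Function.update_apply, hvw _ ht,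
      Finset.prod_congr rfl fun i hi => hvw i (hI hi), hvw j hj]

end Circuits

/-! ### Reachability between multisets of line contents -/

section Reachability

variable {X : Type*} {N : ℕ}

/-- `Layer A B`: a circuit of depth at most one turns lines with contents `A` into lines with
contents `B`. Multisets rather than families of functions are related because output lines may
be permuted; `Bool` carries its ring structure, so `+` is XOR and `*` is AND. -/
inductive Layer : Multiset (X → Bool) → Multiset (X → Bool) → Prop
  | refl (A : Multiset (X → Bool)) : Layer A A
  | gate {C : Multiset (X → Bool)} (hC : C.card ≤ 2) (g : X → Bool) :
      Layer (g ::ₘ C) ((g + C.prod) ::ₘ C)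
  | add {A A' B B' : Multiset (X → Bool)} : Layer A A' → Layer B B' → Layer (A + B) (A' + B')

/-- `Reach d A B`: a succession of `d` layers turns lines with contents `A` into lines with
contents `B`. -/
def Reach : ℕ → Multiset (X → Bool) → Multiset (X → Bool) → Prop
  | 0, A, B => A = B
  | d + 1, A, B => ∃ M, Layer A M ∧ Reach d M B

lemma exists_depthOne_gate {T : Finset (Fin N)} {v : Fin N → X → Bool}
    {C : Multiset (X → Bool)} {g : X → Bool} (hC : C.card ≤ 2) (h : T.val.map v = g ::ₘ C) :
    ∃ p : Circuit N, DepthOne p ∧ p.SupportedOn T ∧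
      T.val.map (p.run v) = (g + C.prod) ::ₘ C := by
  obtain ⟨t, ht, rfl, hC'⟩ := (Multiset.map_eq_cons v T.val C g).2 h
  obtain ⟨I, htI, rfl⟩ : ∃ I, ∃ htI : t ∉ I, T = Finset.cons t I htI :=
    ⟨T.erase t, Finset.notMem_erase t T, by
      rw [Finset.cons_eq_insert, Finset.insert_erase (Finset.mem_def.2 ht)]⟩
  obtain rfl : I.val.map v = C := by rwa [Finset.cons_val, Multiset.erase_cons_head] at hC'
  refine ⟨[⟨I, t, by simpa using hC, htI⟩], List.pairwise_singleton _ _, ?_, ?_⟩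
  · simp [Circuit.SupportedOn]
  · rw [run_singleton, Finset.cons_val, Multiset.map_cons]
    refine congrArg₂ _ (Function.update_self ..) (Multiset.map_congr rfl fun i hi => ?_)
    exact Function.update_of_ne (ne_of_mem_of_not_mem hi htI) ..

lemma depthOne_append {T₁ T₂ : Finset (Fin N)} {p q : Circuit N} (hT : Disjoint T₁ T₂)
    (hp : DepthOne p) (hpT : p.SupportedOn T₁) (hq : DepthOne q) (hqT : q.SupportedOn T₂) :
    DepthOne (p ++ q) :=
  List.pairwise_append.2 ⟨hp, hq, fun a ha b hb => hT.mono (hpT a ha) (hqT b hb)⟩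

lemma map_run_append {T₁ T₂ : Finset (Fin N)} {p q : Circuit N} (hT : Disjoint T₁ T₂)
    (hpT : p.SupportedOn T₁) (hqT : q.SupportedOn T₂) (v : Fin N → X → Bool) :
    (T₁.val + T₂.val).map (Circuit.run (p ++ q) v) =
      T₁.val.map (p.run v) + T₂.val.map (q.run v) := by
  rw [run_append, Multiset.map_add]
  congr 1
  · exact Multiset.map_congr rfl fun i hi =>
      hqT.run_eq_of_notMem _ (Finset.disjoint_left.1 hT hi)
  · exact Multiset.map_congr rfl fun i hi =>
      hqT.run_congr (fun j hj => hpT.run_eq_of_notMem _ (Finset.disjoint_right.1 hT hj)) hi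

lemma Layer.exists_depthOne {A B : Multiset (X → Bool)} (h : Layer A B) {T : Finset (Fin N)}
    {v : Fin N → X → Bool} (hT : T.val.map v = A) :
    ∃ p : Circuit N, DepthOne p ∧ p.SupportedOn T ∧ T.val.map (p.run v) = B := by
  induction h generalizing T with
  | refl A => exact ⟨[], List.Pairwise.nil, List.forall_mem_nil _, hT⟩
  | gate hC g => exact exists_depthOne_gate hC hT
  | add _ _ ih₁ ih₂ =>
    obtain ⟨T₁, T₂, hdisj, hval, hT₁, hT₂⟩ := exists_disjoint_of_map_eq_add hT
    obtain ⟨p, hp, hpT, rfl⟩ := ih₁ hT₁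
    obtain ⟨q, hq, hqT, rfl⟩ := ih₂ hT₂
    have hle₁ : T₁ ⊆ T := Finset.val_le_iff.1 (hval ▸ Multiset.le_add_right ..)
    have hle₂ : T₂ ⊆ T := Finset.val_le_iff.1 (hval ▸ Multiset.le_add_left ..)
    exact ⟨p ++ q, depthOne_append hdisj hp hpT hq hqT,
      List.forall_mem_append.2 ⟨hpT.mono hle₁, hqT.mono hle₂⟩,
      hval ▸ map_run_append hdisj hpT hqT v⟩

lemma Reach.exists_depthOne_parts {d : ℕ} {A B : Multiset (X → Bool)} (h : Reach d A B)
    {v : Fin N → X → Bool} (hv : Finset.univ.val.map v = A) :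
    ∃ parts : List (Circuit N), parts.length = d ∧ (∀ p ∈ parts, DepthOne p) ∧
      Finset.univ.val.map (Circuit.run parts.flatten v) = B := by
  induction d generalizing A v with
  | zero => exact ⟨[], rfl, List.forall_mem_nil _, hv.trans h⟩
  | succ d ih =>
    obtain ⟨M, hlayer, hreach⟩ := h
    obtain ⟨p, hp, -, hrun⟩ := hlayer.exists_depthOne hv
    obtain ⟨parts, hlen, hparts, hflat⟩ := ih hreach hrun
    exact ⟨p :: parts, congrArg (· + 1) hlen, List.forall_mem_cons.2 ⟨hp, hparts⟩,
      by rw [List.flatten_cons, run_append, hflat]⟩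

lemma Reach.refl (d : ℕ) (A : Multiset (X → Bool)) : Reach d A A := by
  induction d with
  | zero => rfl
  | succ d ih => exact ⟨A, Layer.refl A, ih⟩

lemma Reach.add {d : ℕ} {A A' B B' : Multiset (X → Bool)} (h : Reach d A A')
    (h' : Reach d B B') : Reach d (A + B) (A' + B') := by
  induction d generalizing A B with
  | zero => exact congrArg₂ (· + ·) h h'
  | succ d ih =>
    obtain ⟨M, hlayer, hreach⟩ := h
    obtain ⟨M', hlayer', hreach'⟩ := h'
    exact ⟨M + M', hlayer.add hlayer', ih hreach hreach'⟩

lemma Reach.trans {d e : ℕ} {A B C : Multiset (X → Bool)} (h : Reach d A B)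
    (h' : Reach e B C) : Reach (d + e) A C := by
  induction d generalizing A with
  | zero =>
    obtain rfl : A = B := h
    rwa [Nat.zero_add]
  | succ d ih =>
    obtain ⟨M, hlayer, hreach⟩ := h
    rw [Nat.add_right_comm]
    exact ⟨M, hlayer, ih hreach⟩

lemma Reach.mono {d e : ℕ} (hde : d ≤ e) {A B : Multiset (X → Bool)} (h : Reach d A B) :
    Reach e A B := by
  obtain ⟨c, rfl⟩ := Nat.exists_eq_add_of_le hde
  exact h.trans (Reach.refl c B)

end Reachability

/-! ### Computing with additional lines -/

section Computing

variable {X ι κ : Type*} [Fintype ι] [Fintype κ]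

/-- The multiset of the contents of a family of lines. -/
def lines (y : ι → X → Bool) : Multiset (X → Bool) :=
  ∑ i, {y i}

/-- `Computes d z A B`: with the help of `z` lines initially zero, lines with contents `A` are
turned in depth `d` into lines whose contents include `B`. The other lines (the multiset `G`)
hold garbage. -/
def Computes (d z : ℕ) (A B : Multiset (X → Bool)) : Prop :=
  ∃ G, Reach d (A + Multiset.replicate z 0) (B + G)

lemma lines_eq_map (y : ι → X → Bool) : lines y = Finset.univ.val.map y := by
  rw [← Multiset.sum_map_singleton (Finset.univ.val.map y), Multiset.map_map]
  rfl

lemma lines_prod (y : ι × κ → X → Bool) : lines y = ∑ i, lines fun j => y (i, j) :=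
  Fintype.sum_prod_type _

lemma lines_fin_add {m n : ℕ} (y : Fin (m + n) → X → Bool) :
    lines y = lines (fun i => y (Fin.castAdd n i)) + lines (fun i => y (Fin.natAdd m i)) :=
  Fin.sum_univ_add _

lemma map_pad_eq_lines_add_replicate (n q : ℕ) :
    (Finset.univ : Finset (Fin (n + q))).val.map (fun i (x : Fin n → Bool) => pad x i) =
      lines (fun v (x : Fin n → Bool) => x v) + Multiset.replicate q 0 := by
  rw [← lines_eq_map, lines_fin_add]
  congr 1
  · simp [pad]
  · rw [lines_eq_map]
    simp only [pad, Fin.val_natAdd, add_lt_iff_neg_left, not_lt_zero, dite_false,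
      Multiset.map_const', Finset.card_val, Finset.card_univ, Fintype.card_fin]
    rfl

lemma Computes.exists_implements {n q m d : ℕ} {f : (Fin n → Bool) → Fin m → Bool}
    (h : Computes d q (lines fun v x => x v) (lines fun i x => f x i)) :
    ∃ S : Circuit (n + q), Implements S f ∧ S.D ≤ d := by
  obtain ⟨G, hG⟩ := h
  obtain ⟨parts, hlen, hparts, hrun⟩ :=
    hG.exists_depthOne_parts (map_pad_eq_lines_add_replicate n q)
  rw [lines_eq_map] at hrun
  have hcard : m + G.card = n + q := by simpa using congrArg Multiset.card hrun.symm
  obtain ⟨w, hw, hwf⟩ := exists_fin_map_eq_map_add (fun i x => f x i) G hcard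
  obtain ⟨σ, hσ⟩ := exists_perm_of_map_univ_eq (hrun.trans hw.symm)
  refine ⟨parts.flatten, ⟨by omega, σ.symm, fun x j hj => ?_⟩,
    Nat.sInf_le ⟨parts, hlen, rfl, hparts⟩⟩
  have hline :
      Circuit.run parts.flatten (fun i x => pad x i) (σ.symm ⟨j, hj⟩) = fun x => f x j := by
    rw [hσ, Function.comp_apply, σ.apply_symm_apply, hwf]
  exact congrFun hline x

lemma Dmin_le_of_computes {n q d : ℕ} {f : (Fin n → Bool) → Fin n → Bool}
    (h : Computes d q (lines fun v x => x v) (lines fun i x => f x i)) : Dmin n q f ≤ d := by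
  obtain ⟨S, hS, hd⟩ := h.exists_implements
  exact le_trans (Nat.sInf_le ⟨S, hS, rfl⟩) hd

variable {d e z w : ℕ} {A A' B B' C : Multiset (X → Bool)}

lemma Computes.mono (h : Computes d z A B) (hd : d ≤ e) (hz : z ≤ w) : Computes e w A B := by
  obtain ⟨G, hG⟩ := h
  obtain ⟨c, rfl⟩ := Nat.exists_eq_add_of_le hz
  refine ⟨G + Multiset.replicate c 0, ?_⟩
  rw [Multiset.replicate_add, ← add_assoc, ← add_assoc]
  exact (hG.add (Reach.refl d _)).mono hd

lemma Computes.refl (d : ℕ) (A : Multiset (X → Bool)) : Computes d 0 A A :=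
  ⟨0, Reach.refl d _⟩

lemma Computes.add (h : Computes d z A B) (h' : Computes d w A' B') :
    Computes d (z + w) (A + A') (B + B') := by
  obtain ⟨G, hG⟩ := h
  obtain ⟨G', hG'⟩ := h'
  refine ⟨G + G', ?_⟩
  rw [Multiset.replicate_add, add_add_add_comm, add_add_add_comm B]
  exact hG.add hG'

lemma Computes.trans (h : Computes d z A B) (h' : Computes e w B C) :
    Computes (d + e) (z + w) A C := by
  obtain ⟨G, hG⟩ := h
  obtain ⟨G', hG'⟩ := h'
  refine ⟨G' + G, ?_⟩
  have hfirst := hG.add (Reach.refl d (Multiset.replicate w 0))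
  have hsecond := hG'.add (Reach.refl e G)
  rw [add_right_comm B] at hfirst
  rw [Multiset.replicate_add, ← add_assoc, ← add_assoc]
  exact hfirst.trans hsecond

lemma Computes.of_add_right (h : Computes d z A (B + C)) : Computes d z A B := by
  obtain ⟨G, hG⟩ := h
  exact ⟨C + G, by rwa [← add_assoc]⟩

lemma Computes.sum {ι : Type*} (s : Finset ι) {z : ι → ℕ} {A B : ι → Multiset (X → Bool)}
    (h : ∀ i ∈ s, Computes d (z i) (A i) (B i)) :
    Computes d (∑ i ∈ s, z i) (∑ i ∈ s, A i) (∑ i ∈ s, B i) := by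
  classical
  induction s using Finset.induction_on with
  | empty => exact Computes.refl d 0
  | insert a s ha ih =>
    obtain ⟨hcomp, hs⟩ := Finset.forall_mem_insert .. |>.1 h
    rw [Finset.sum_insert ha, Finset.sum_insert ha, Finset.sum_insert ha]
    exact hcomp.add (ih hs)

lemma Computes.sum_univ {A B : ι → Multiset (X → Bool)} (h : ∀ i, Computes d z (A i) (B i)) :
    Computes d (Fintype.card ι * z) (∑ i, A i) (∑ i, B i) := by
  simpa using Computes.sum Finset.univ fun i _ => h i

lemma computes_gate {C : Multiset (X → Bool)} (hC : C.card ≤ 2) (g : X → Bool) :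
    Computes 1 0 (g ::ₘ C) ((g + C.prod) ::ₘ C) :=
  ⟨0, by simpa using ⟨_, Layer.gate hC g, rfl⟩⟩

lemma computes_gate_zero {C : Multiset (X → Bool)} (hC : C.card ≤ 2) :
    Computes 1 1 C (C.prod ::ₘ C) := by
  obtain ⟨G, hG⟩ := computes_gate hC 0
  exact ⟨G, by simpa [add_comm C] using hG⟩

lemma computes_copy (f : X → Bool) : Computes 1 1 {f} (2 • {f}) := by
  have h := computes_gate_zero (C := {f}) (by simp)
  rw [Multiset.prod_singleton] at h
  rwa [two_nsmul]

lemma computes_not (f : X → Bool) : Computes 1 0 {f} {f + 1} := by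
  simpa using computes_gate (C := 0) (by simp) f

lemma computes_xor (f g : X → Bool) : Computes 1 0 {f, g} {f + g} := by
  have h := computes_gate (C := {g}) (by simp) f
  rw [Multiset.prod_singleton] at h
  exact h.of_add_right (C := {g})

lemma computes_and (f g : X → Bool) : Computes 1 1 {f, g} {f * g} := by
  have h := computes_gate_zero (C := {f, g}) (by simp)
  rw [Multiset.prod_pair] at h
  exact h.of_add_right (C := {f, g})

/-! ### Balanced trees -/

lemma computes_replicate (f : X → Bool) {d c : ℕ} (hc : c ≤ 2 ^ d) :
    Computes d c {f} (Multiset.replicate c f) := by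
  induction d generalizing c with
  | zero =>
    obtain rfl | rfl : c = 0 ∨ c = 1 := by rw [pow_zero] at hc; omega
    · exact ⟨{f}, (add_comm _ _ : ({f} : Multiset (X → Bool)) + 0 = 0 + {f})⟩
    · exact (Computes.refl 0 {f}).mono le_rfl zero_le_one
  | succ d ih =>
    obtain ⟨b, r, rfl, hr⟩ : ∃ b r, c = 2 * b + r ∧ r ≤ 1 := ⟨c / 2, c % 2, by omega, by omega⟩
    have hhalf := ih (c := b + r) (by rw [pow_succ] at hc; omega)
    have hdouble : Computes 1 b (Multiset.replicate b f) (Multiset.replicate (2 * b) f) := by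
      have h := Computes.sum_univ fun _ : Fin b => computes_copy f
      rw [← Multiset.nsmul_singleton, ← Multiset.nsmul_singleton, mul_nsmul]
      simpa using h
    have hlast := hdouble.add (Computes.refl 1 (Multiset.replicate r f))
    rw [← Multiset.replicate_add, ← Multiset.replicate_add] at hlast
    exact (hhalf.trans hlast).mono le_rfl (by omega)

lemma exists_eq_add_card_eq {α : Type*} (A : Multiset α) {j : ℕ} (hj : j ≤ A.card) :
    ∃ B C, A = B + C ∧ B.card = j := by
  refine ⟨A.toList.take j, A.toList.drop j, ?_, by simpa using hj⟩
  rw [Multiset.coe_add, List.take_append_drop, Multiset.coe_toList]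

lemma computes_tree {F : Multiset (X → Bool) → X → Bool} (hsingle : ∀ a, F {a} = a)
    (hadd : ∀ B C, Computes 1 z {F B, F C} {F (B + C)}) {d c : ℕ} {A : Multiset (X → Bool)}
    (hA : A.card = c + 1) (hd : c + 1 ≤ 2 ^ d) : Computes d (c * z) A {F A} := by
  induction d generalizing A c with
  | zero =>
    obtain rfl : c = 0 := by simpa using hd
    obtain ⟨a, rfl⟩ := Multiset.card_eq_one.1 hA
    rw [hsingle, zero_mul]
    exact Computes.refl 0 {a}
  | succ d ih =>
    rcases le_or_gt (c + 1) (2 ^ d) with hsmall | hbig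
    · exact (ih hA hsmall).mono (Nat.le_succ d) le_rfl
    · obtain ⟨B, C, rfl, hB⟩ := exists_eq_add_card_eq A (hbig.le.trans_eq hA.symm)
      rw [Multiset.card_add] at hA
      obtain ⟨b, hb⟩ := Nat.exists_eq_succ_of_ne_zero (Nat.two_pow_pos d).ne'
      obtain ⟨c', rfl⟩ : ∃ c', c = b + c' + 1 := ⟨c - (b + 1), by omega⟩
      have hleft := ih (A := B) (c := b) (by omega) (by omega)
      have hright := ih (A := C) (c := c') (by omega) (by rw [pow_succ] at hd; omega)
      refine ((hleft.add hright).trans (hadd B C)).mono le_rfl (le_of_eq ?_)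
      ring

lemma computes_sum (y : κ → X → Bool) {s : Finset κ} {d : ℕ} (hd : s.card ≤ 2 ^ d) :
    Computes d 1 (lines y) {∑ j ∈ s, y j} := by
  classical
  have hlines : lines y = s.val.map y + (sᶜ).val.map y := by
    rw [lines_eq_map, ← Multiset.map_add, ← Finset.disjUnion_val _ _ disjoint_compl_right]
    simp [Finset.disjUnion_eq_union]
  suffices h : Computes d 1 (s.val.map y) {∑ j ∈ s, y j} by
    rw [hlines]
    exact (h.add (Computes.refl d ((sᶜ).val.map y))).of_add_right
  rcases hs : s.card with _ | c
  · obtain rfl := Finset.card_eq_zero.1 hs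
    exact ⟨0, Reach.refl d _⟩
  · exact (computes_tree Multiset.sum_singleton
      (fun B C => by simpa using computes_xor B.sum C.sum) (by simpa using hs)
      (hs ▸ hd)).mono le_rfl (by simp)

lemma computes_prod [Nonempty κ] (y : κ → X → Bool) {d : ℕ} (hd : Fintype.card κ ≤ 2 ^ d) :
    Computes d (Fintype.card κ) (lines y) {∏ j, y j} := by
  obtain ⟨c, hc⟩ := Nat.exists_eq_succ_of_ne_zero (Fintype.card_ne_zero (α := κ))
  rw [lines_eq_map]
  exact (computes_tree Multiset.prod_singleton
    (fun B C => by simpa using computes_and B.prod C.prod) (by simpa using hc)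
    (hc ▸ hd)).mono le_rfl (by omega)

lemma computes_copies [DecidableEq κ] (g : κ → X → Bool) (t : ι → κ) {d : ℕ}
    (hd : ∀ c, (Finset.univ.filter fun i => t i = c).card ≤ 2 ^ d) :
    Computes d (Fintype.card ι) (lines g) (lines fun i => g (t i)) := by
  have h := Computes.sum Finset.univ fun c _ => computes_replicate (g c) (hd c)
  rw [← Finset.card_eq_sum_card_fiberwise fun _ _ => Finset.mem_univ _, Finset.card_univ] at h
  have hfiber (c : κ) : Multiset.replicate (Finset.univ.filter fun i => t i = c).card (g c) =
      ∑ i with t i = c, {g (t i)} := by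
    rw [← Multiset.nsmul_singleton, ← Finset.sum_const]
    exact Finset.sum_congr rfl fun i hi => by rw [(Finset.mem_filter.1 hi).2]
  simp only [hfiber, Finset.sum_fiberwise] at h
  exact h

lemma computes_copies_snd (g : κ → X → Bool) {d : ℕ} (hd : Fintype.card ι ≤ 2 ^ d) :
    Computes d (Fintype.card ι * Fintype.card κ) (lines g) (lines fun p : ι × κ => g p.2) := by
  classical
  rw [← Fintype.card_prod]
  exact computes_copies g Prod.snd fun c => (card_filter_snd_eq c).trans_le hd

lemma computes_mul (y w : ι → X → Bool) :
    Computes 1 (Fintype.card ι) (lines y + lines w) (lines fun i => y i * w i) := by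
  have h := Computes.sum_univ fun i => computes_and (y i) (w i)
  rw [mul_one] at h
  rw [lines, lines, ← Finset.sum_add_distrib]
  exact h

end Computing

/-! ### Minterms and the expansion of Boolean functions -/

section Minterms

variable {X K M ι : Type*} [Fintype K] [Fintype M] [Fintype ι]

/-- The minterm `wᵃ`: the indicator function of `w = a`, as a product of literals. -/
def minterm (w : M → X → Bool) (a : M → Bool) : X → Bool :=
  ∏ v, if a v then w v else w v + 1

lemma minterm_apply (w : M → X → Bool) (a : M → Bool) (x : X) :
    minterm w a x = if (fun v => w v x) = a then 1 else 0 := by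
  have hliteral (v : M) : (if a v then w v else w v + 1) x = if w v x = a v then 1 else 0 := by
    cases ha : a v <;> cases hw : w v x <;>
      simp [hw, Bool.zero_eq_false, Bool.one_eq_true, Bool.add_eq_xor]
  simp only [minterm, Finset.prod_apply, hliteral, Finset.prod_ite_zero, Finset.prod_const_one,
    Finset.mem_univ, true_imp_iff, funext_iff]

lemma sum_mul_minterm [DecidableEq M] (g : (M → Bool) → X → Bool) (w : M → X → Bool) :
    ∑ a, g a * minterm w a = fun x => g (fun v => w v x) x := by
  funext x
  simp [minterm_apply]

lemma sum_minterm_filter [DecidableEq M] (h : (M → Bool) → Bool) (w : M → X → Bool) :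
    ∑ a with h a = true, minterm w a = fun x => h fun v => w v x := by
  rw [Finset.sum_filter, ← sum_mul_minterm (fun a _ => h a) w]
  refine Finset.sum_congr rfl fun a _ => ?_
  funext x
  cases ha : h a <;> simp [Bool.mul_eq_and, Bool.zero_eq_false]

lemma computes_minterms [DecidableEq M] [Nonempty M] (w : M → X → Bool) {e : ℕ}
    (he : Fintype.card M ≤ 2 ^ e) :
    Computes (Fintype.card M + 1 + e) (2 * (Fintype.card M * 2 ^ Fintype.card M))
      (lines w) (lines (minterm w)) := by
  have hcopies : Computes (Fintype.card M) (2 ^ Fintype.card M * Fintype.card M) (lines w)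
      (lines fun p : (M → Bool) × M => w p.2) := by
    simpa using computes_copies_snd (ι := M → Bool) w (d := Fintype.card M) (by simp)
  have hliterals : Computes 1 0 (lines fun p : (M → Bool) × M => w p.2)
      (lines fun p : (M → Bool) × M => if p.1 p.2 then w p.2 else w p.2 + 1) := by
    refine Computes.sum_univ (z := 0) fun p => ?_
    dsimp only
    split_ifs
    exacts [Computes.refl 1 _, computes_not _]
  have hproducts : Computes e (2 ^ Fintype.card M * Fintype.card M)
      (lines fun p : (M → Bool) × M => if p.1 p.2 then w p.2 else w p.2 + 1)
      (lines (minterm w)) := by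
    rw [lines_prod]
    have h := Computes.sum_univ fun a : M → Bool =>
      computes_prod (fun v => if a v then w v else w v + 1) he
    rwa [Fintype.card_fun, Fintype.card_bool] at h
  refine ((hcopies.trans hliterals).trans hproducts).mono le_rfl (le_of_eq ?_)
  ring

lemma two_pow_two_pow_memory_le (k : ℕ) :
    2 * (k * 2 ^ k) + 2 ^ 2 ^ k * 2 ^ k + 2 ^ 2 ^ k ≤ 4 * 2 ^ (2 * 2 ^ k) := by
  have hk : k ≤ 2 ^ 2 ^ k := (Nat.lt_two_pow_self.trans Nat.lt_two_pow_self).le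
  have hpow : 2 ^ k ≤ 2 ^ 2 ^ k := Nat.lt_two_pow_self.le
  calc 2 * (k * 2 ^ k) + 2 ^ 2 ^ k * 2 ^ k + 2 ^ 2 ^ k
      ≤ 2 * (2 ^ 2 ^ k * 2 ^ 2 ^ k) + 2 ^ 2 ^ k * 2 ^ 2 ^ k + 2 ^ 2 ^ k * 2 ^ 2 ^ k := by
        gcongr
        exact Nat.le_mul_of_pos_left _ (Nat.two_pow_pos _)
    _ = 4 * 2 ^ (2 * 2 ^ k) := by ring

lemma computes_all_functions [DecidableEq K] [Nonempty K] (y : K → X → Bool) {e : ℕ}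
    (he : Fintype.card K ≤ 2 ^ e) :
    Computes (2 * Fintype.card K + 2 ^ Fintype.card K + e + 1) (4 * 2 ^ (2 * 2 ^ Fintype.card K))
      (lines y) (lines fun (h : (K → Bool) → Bool) x => h fun v => y v x) := by
  have hcopies : Computes (2 ^ Fintype.card K) (2 ^ 2 ^ Fintype.card K * 2 ^ Fintype.card K)
      (lines (minterm y)) (lines fun p : ((K → Bool) → Bool) × (K → Bool) => minterm y p.2) := by
    simpa using computes_copies_snd (ι := (K → Bool) → Bool) (minterm y)
      (d := 2 ^ Fintype.card K) (by simp)
  have hsums : Computes (Fintype.card K) (2 ^ 2 ^ Fintype.card K)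
      (lines fun p : ((K → Bool) → Bool) × (K → Bool) => minterm y p.2)
      (lines fun (h : (K → Bool) → Bool) x => h fun v => y v x) := by
    rw [lines_prod]
    have htrees := Computes.sum_univ fun h : (K → Bool) → Bool =>
      computes_sum (minterm y) (s := {a | h a = true}) (d := Fintype.card K)
        ((Finset.card_le_univ _).trans (by simp))
    simp only [sum_minterm_filter, mul_one, Fintype.card_fun, Fintype.card_bool] at htrees
    exact htrees
  exact (((computes_minterms y he).trans hcopies).trans hsums).mono (by omega)
    (two_pow_two_pow_memory_le _)

lemma computes_cofactors [DecidableEq M] [Nonempty K] (y : K → X → Bool)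
    (f : (K → Bool) → (M → Bool) → ι → Bool) {e : ℕ}
    (hK : Fintype.card K ≤ 2 ^ e) (hι : Fintype.card ι ≤ 2 ^ e) :
    Computes (Fintype.card M + 2 * Fintype.card K + 2 ^ Fintype.card K + 2 * e + 1)
      (4 * 2 ^ (2 * 2 ^ Fintype.card K) + Fintype.card ι * 2 ^ Fintype.card M)
      (lines y) (lines fun (p : ι × (M → Bool)) x => f (fun v => y v x) p.2 p.1) := by
  classical
  have hcopies := computes_copies (fun (h : (K → Bool) → Bool) x => h fun v => y v x)
    (fun (p : ι × (M → Bool)) b => f b p.2 p.1) (d := e + Fintype.card M) fun c => by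
      calc _ ≤ Fintype.card (ι × (M → Bool)) := Finset.card_le_univ _
        _ = Fintype.card ι * 2 ^ Fintype.card M := by simp
        _ ≤ 2 ^ (e + Fintype.card M) := by rw [pow_add]; gcongr
  exact ((computes_all_functions y hK).trans hcopies).mono (by omega) (by simp)

lemma computes_of_split [Nonempty K] [Nonempty M] (y : K → X → Bool) (w : M → X → Bool)
    (f : (K → Bool) → (M → Bool) → ι → Bool) {e : ℕ} (hK : Fintype.card K ≤ 2 ^ e)
    (hM : Fintype.card M ≤ 2 ^ e) (hι : Fintype.card ι ≤ 2 ^ e) :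
    Computes (2 * Fintype.card M + 2 * Fintype.card K + 2 ^ Fintype.card K + 2 * e + 2)
      (4 * 2 ^ (2 * 2 ^ Fintype.card K) + 2 * (Fintype.card M * 2 ^ Fintype.card M)
        + 3 * (Fintype.card ι * 2 ^ Fintype.card M) + Fintype.card ι)
      (lines y + lines w) (lines fun i x => f (fun v => y v x) (fun v => w v x) i) := by
  classical
  have hcofactors := computes_cofactors (M := M) y f hK hι
  have hminterms := (computes_minterms w hM).trans (computes_copies_snd (ι := ι) (minterm w) hι)
  have hmul := computes_mul (fun (p : ι × (M → Bool)) x => f (fun v => y v x) p.2 p.1)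
    fun p => minterm w p.2
  have hsum := Computes.sum_univ fun i : ι => computes_sum
    (fun a : M → Bool => (fun x => f (fun v => y v x) a i) * minterm w a)
    (s := Finset.univ) (d := Fintype.card M) (by simp)
  simp only [sum_mul_minterm fun a x => f (fun v => y v x) a _] at hsum
  rw [← lines_prod fun p : ι × (M → Bool) => (fun x => f (fun v => y v x) p.2 p.1) * minterm w p.2]
    at hsum
  refine (((hcofactors.add (hminterms.mono ?_ le_rfl)).trans hmul).trans hsum).mono ?_ ?_
  · have := Nat.two_pow_pos (Fintype.card K)
    omega
  · omega
  · simp only [Fintype.card_prod, Fintype.card_fun, Fintype.card_bool]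
    omega

end Minterms

lemma Dsh_add_le {k m q : ℕ} (hk : 0 < k) (hm : 0 < m)
    (hq : 4 * 2 ^ (2 * 2 ^ k) + 6 * ((k + m) * 2 ^ m) ≤ q) :
    Dsh (k + m) q ≤ 2 * (k + m) + 2 ^ k + 2 * Nat.clog 2 (k + m) + 2 := by
  refine csSup_le' ?_
  rintro d ⟨f, -, rfl⟩
  have : NeZero k := ⟨hk.ne'⟩
  have : NeZero m := ⟨hm.ne'⟩
  have hclog : k + m ≤ 2 ^ Nat.clog 2 (k + m) := Nat.le_pow_clog one_lt_two _
  have hsplit := computes_of_split (fun v (x : Fin (k + m) → Bool) => x (Fin.castAdd m v))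
    (fun v x => x (Fin.natAdd k v)) (fun a b => f (Fin.append a b)) (e := Nat.clog 2 (k + m))
    (by rw [Fintype.card_fin]; omega) (by rw [Fintype.card_fin]; omega) (by simpa using hclog)
  simp only [Fin.append_castAdd_natAdd, Fintype.card_fin] at hsplit
  rw [← lines_fin_add fun v (x : Fin (k + m) → Bool) => x v] at hsplit
  refine Dmin_le_of_computes (hsplit.mono (by omega) (le_trans ?_ hq))
  have hm' : m * 2 ^ m ≤ (k + m) * 2 ^ m := Nat.mul_le_mul_right _ (Nat.le_add_left m k)
  have hn : k + m ≤ (k + m) * 2 ^ m := Nat.le_mul_of_pos_right _ (Nat.two_pow_pos m)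
  omega

/-! ### Asymptotics -/

section Asymptotics

open Asymptotics

lemma exists_two_pow_between {x : ℝ} (hx : 0 ≤ x) :
    ∃ k : ℕ, 0 < k ∧ x ≤ 2 ^ k ∧ (2 : ℝ) ^ k ≤ 2 * x + 2 := by
  obtain ⟨k, hle, hlt⟩ := exists_nat_pow_near (by linarith : 1 ≤ x + 1) one_lt_two
  exact ⟨k + 1, k.succ_pos, by linarith, by rw [pow_succ]; linarith⟩

lemma natClog_le_logb_add_one {n : ℕ} (hn : 0 < n) :
    (Nat.clog 2 n : ℝ) ≤ Real.logb 2 n + 1 := by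
  have hlogb : 0 ≤ Real.logb 2 n := Real.logb_nonneg one_lt_two (by exact_mod_cast hn)
  have hceil := (Nat.ceil_lt_add_one hlogb).le
  rwa [← Nat.cast_two, Real.natCeil_logb_natCast, Nat.cast_two] at hceil

lemma memory_le_mul_two_pow {k m : ℕ} {p : ℝ} (hp : 64 ≤ p) (hk : 2 * 2 ^ k ≤ k + m)
    (hkp : 8 * ((k + m : ℕ) : ℝ) ≤ 2 ^ k * p) :
    4 * 2 ^ (2 * 2 ^ k) + 6 * (((k + m : ℕ) : ℝ) * 2 ^ m) ≤ p * 2 ^ (k + m) := by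
  calc 4 * 2 ^ (2 * 2 ^ k) + 6 * (((k + m : ℕ) : ℝ) * 2 ^ m)
      = 4 * 2 ^ (2 * 2 ^ k) + 3 / 4 * (8 * ((k + m : ℕ) : ℝ)) * 2 ^ m := by ring
    _ ≤ 4 * 2 ^ (k + m) + 3 / 4 * (2 ^ k * p) * 2 ^ m := by
        gcongr
        exact one_le_two
    _ = (4 + 3 / 4 * p) * 2 ^ (k + m) := by ring
    _ ≤ p * 2 ^ (k + m) := by
        gcongr
        linarith

lemma Dsh_le_of_mul_two_pow_le {n q : ℕ} {p : ℝ} (hn : 8 ≤ n) (hp : 64 ≤ p)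
    (hq : p * 2 ^ n ≤ q) :
    (Dsh n q : ℝ) ≤ 2 * n + (16 * (n / p) + 2 * Real.logb 2 n + 6) := by
  have hp₀ : 0 < p := by linarith
  have hn' : (8 : ℝ) ≤ n := by exact_mod_cast hn
  obtain ⟨k, hk, hle, hge⟩ := exists_two_pow_between (x := 8 * (n / p)) (by positivity)
  have hratio : (n : ℝ) / p ≤ n / 64 := by gcongr
  have hkn : 2 * 2 ^ k ≤ n := by
    have : 2 * (2 : ℝ) ^ k ≤ n := by linarith
    exact_mod_cast this
  obtain ⟨m, rfl⟩ : ∃ m, n = k + m :=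
    Nat.exists_eq_add_of_le (by have := k.lt_two_pow_self; omega)
  have hm : 0 < m := by have := k.lt_two_pow_self; omega
  have hkp : 8 * ((k + m : ℕ) : ℝ) ≤ 2 ^ k * p := by
    rwa [← mul_div_assoc, div_le_iff₀ hp₀] at hle
  have hmemory := (memory_le_mul_two_pow hp hkn hkp).trans hq
  have hdepth : (Dsh (k + m) q : ℝ) ≤
      2 * (k + m : ℕ) + 2 ^ k + 2 * Nat.clog 2 (k + m) + 2 := by
    exact_mod_cast Dsh_add_le hk hm (by exact_mod_cast hmemory)
  have hclog := natClog_le_logb_add_one (n := k + m) (by omega)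
  linarith

lemma asympLE_of_eventually_le_add {a b r : ℕ → ℝ} (ha : ∀ᶠ n in atTop, 0 ≤ a n)
    (hb : ∀ᶠ n in atTop, 0 < b n) (hr : r =o[atTop] b)
    (h : ∀ᶠ n in atTop, a n ≤ b n + r n) : AsympLE a b := by
  have hlim : Tendsto (fun n => 1 + r n / b n) atTop (nhds 1) := by
    simpa using hr.tendsto_div_nhds_zero.const_add 1
  have hle : ∀ᶠ n in atTop, a n / b n ≤ 1 + r n / b n := by
    filter_upwards [hb, h] with n hbn hn
    rw [one_add_div hbn.ne']
    gcongr
  have hnonneg : ∀ᶠ n in atTop, 0 ≤ a n / b n := by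
    filter_upwards [ha, hb] with n han hbn using div_nonneg han hbn.le
  exact (limsup_le_limsup hle (isCoboundedUnder_le_of_eventually_le atTop hnonneg)
    hlim.isBoundedUnder_le).trans_eq hlim.limsup_eq

lemma isLittleO_depth_remainder {p : ℕ → ℝ} (hp : Tendsto p atTop atTop) :
    (fun n : ℕ => 16 * (n / p n) + 2 * Real.logb 2 n + 6) =o[atTop]
      fun n : ℕ => 2 * (n : ℝ) := by
  have hcast : Tendsto (fun n : ℕ => (n : ℝ)) atTop atTop := tendsto_natCast_atTop_atTop
  have hdiv : (fun n : ℕ => n / p n) =o[atTop] fun n : ℕ => (n : ℝ) := by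
    simpa [div_eq_mul_inv] using (isBigO_refl (fun n : ℕ => (n : ℝ)) atTop).mul_isLittleO
      ((isLittleO_one_iff ℝ).2 (tendsto_inv_atTop_zero.comp hp))
  have hlogb : (fun n : ℕ => Real.logb 2 n) =o[atTop] fun n : ℕ => (n : ℝ) := by
    simpa [Real.logb, div_eq_inv_mul] using
      (Real.isLittleO_log_id_atTop.comp_tendsto hcast).const_mul_left (Real.log 2)⁻¹
  have hconst : (fun _ : ℕ => (6 : ℝ)) =o[atTop] fun n : ℕ => (n : ℝ) :=
    (isLittleO_const_id_atTop (6 : ℝ)).comp_tendsto hcast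
  exact (((hdiv.const_mul_left 16).add (hlogb.const_mul_left 2)).add hconst).const_mul_right
    two_ne_zero

lemma asympLE_Dsh_two_mul {q : ℕ → ℕ}
    (hq : Tendsto (fun n => (q n : ℝ) / 2 ^ n) atTop atTop) :
    AsympLE (fun n => (Dsh n (q n) : ℝ)) fun n => 2 * (n : ℝ) := by
  refine asympLE_of_eventually_le_add (.of_forall fun n => Nat.cast_nonneg _) ?_
    (isLittleO_depth_remainder hq) ?_
  · filter_upwards [eventually_gt_atTop 0] with n hn
    positivity
  · filter_upwards [eventually_ge_atTop 8, hq.eventually_ge_atTop 64] with n hn hqn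
    exact Dsh_le_of_mul_two_pow_le hn hqn (div_mul_cancel₀ _ (by positivity)).le

end Asymptotics

theorem depth_upper_with_memory_2n_general (φ : ℕ → ℝ) (hφ : Tendsto φ atTop atTop) :
    ∃ q₂ : ℕ → ℕ,
      AsympEquiv (fun n => (q₂ n : ℝ)) (fun n => φ n * (2 : ℝ) ^ n) ∧
      AsympLE (fun n => (Dsh n (q₂ n) : ℝ)) (fun n => 2 * (n : ℝ)) := by
  refine ⟨fun n => ⌈φ n * 2 ^ n⌉₊, ?_, asympLE_Dsh_two_mul ?_⟩
  · have hmemory : Tendsto (fun n => φ n * (2 : ℝ) ^ n) atTop atTop :=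
      hφ.atTop_mul_atTop₀ (tendsto_pow_atTop_atTop_of_one_lt one_lt_two)
    exact (tendsto_nat_ceil_div_atTop (R := ℝ)).comp hmemory
  · refine tendsto_atTop_mono (fun n => ?_) hφ
    rw [le_div_iff₀ (by positivity)]
    exact Nat.le_ceil _

/-- For every growing function `φ` with `φ(n) < n` for all `n`, there is a sequence
`q₂(n) ~ φ(n) · 2ⁿ` such that `D(n, q₂(n)) ≲ 2n`. -/
theorem depth_upper_with_memory_2n (φ : ℕ → ℝ) (hφ : Growing φ)
    (hφn : ∀ n, φ n < (n : ℝ)) :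
    ∃ q₂ : ℕ → ℕ,
      AsympEquiv (fun n => (q₂ n : ℝ)) (fun n => φ n * (2 : ℝ) ^ n) ∧
      AsympLE (fun n => (Dsh n (q₂ n) : ℝ)) (fun n => 2 * (n : ℝ)) :=
  depth_upper_with_memory_2n_general φ hφ.2

end Rev
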